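/- Let T be a complete and open subtree of the tableau T_{φ0} and M^T the model induced by T. If ρ1 ∼_i ρ2 in M^T, then L(ρ1)|x = L(ρ2)|x for each x ∈ {K_i, ¬K_i, Kh_i, ¬Kh_i}, where L(ρ)|x denotes the set of formulas of syntactic form x in the label of the last node of ρ. -/

import Mathlib

/-!
Formalization of the logic of strategically knowing how (ELKh_n) and of the
tableau procedure for it.
-/

namespace ELKh

/-- Formulas of the language ELKh_n:
`φ ::= ⊥ | p | ¬φ | (φ ∧ φ) | K_i φ | Kh_i φ`. -/
inductive Formula (P I : Type) : Type
  | bot : Formula P I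
  | atom : P → Formula P I
  | neg : Formula P I → Formula P I
  | and : Formula P I → Formula P I → Formula P I
  | know : I → Formula P I → Formula P I
  | kh : I → Formula P I → Formula P I

variable {P I : Type}

/-- Models of ELKh_n: states with equivalence relations `∼ᵢ`, actions for each
agent, a transition relation for each action, and a valuation. -/
structure Model (P I : Type) where
  W : Type
  sim : I → W → W → Prop
  equiv : ∀ i, Equivalence (sim i)
  Act : I → Type
  R : (i : I) → Act i → W → W → Prop
  V : W → P → Prop

/-- Transition between `i`-equivalence classes (classes are represented by
member states): `[s]ⁱ →ₐ [t]ⁱ` iff some `s' ∈ [s]ⁱ`, `t' ∈ [t]ⁱ` have `R a s' t'`. -/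
def Model.ctrans (M : Model P I) (i : I) (a : M.Act i) (s t : M.W) : Prop :=
  ∃ s' t', M.sim i s s' ∧ M.sim i t t' ∧ M.R i a s' t'

/-- Uniformly executable strategies for agent `i`: partial functions from
`∼ᵢ`-equivalence classes to actions of `i` (hence constant on classes), whose
chosen action is executable at every member of the class. -/
structure Strategy (M : Model P I) (i : I) where
  act : M.W → Option (M.Act i)
  congr : ∀ s t, M.sim i s t → act s = act t
  exec : ∀ s a, act s = some a → ∀ t, M.sim i s t → ∃ u, M.R i a t u

namespace Strategy

variable {M : Model P I} {i : I}

/-- The `k`-th step of the sequence of classes `[δ 0][δ 1]⋯` is a σ-step. -/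
def Steps (σ : Strategy M i) (δ : ℕ → M.W) (k : ℕ) : Prop :=
  ∃ a, σ.act (δ k) = some a ∧ M.ctrans i a (δ k) (δ (k+1))

/-- `[δ 0]⋯[δ h]` is a (finite) possible execution of σ. -/
def FinExec (σ : Strategy M i) (δ : ℕ → M.W) (h : ℕ) : Prop :=
  ∀ k < h, σ.Steps δ k

/-- `[δ 0]⋯[δ h]` is a complete finite execution of σ (its end class is not in
the domain of σ). -/
def CompleteFinExec (σ : Strategy M i) (δ : ℕ → M.W) (h : ℕ) : Prop :=
  σ.FinExec δ h ∧ σ.act (δ h) = none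

/-- `[δ 0][δ 1]⋯` is an infinite possible execution of σ (such an execution is
automatically complete). -/
def InfExec (σ : Strategy M i) (δ : ℕ → M.W) : Prop :=
  ∀ k, σ.Steps δ k

end Strategy

/-- Satisfaction for ELKh_n.  `Kh_i φ` holds at `s` iff there is a strategy σ
for `i` such that all complete executions of σ starting from `[s]ⁱ` are finite
(equivalently: there is no infinite execution of σ from `[s]ⁱ`) and every state
of every end class of a complete (finite) execution from `[s]ⁱ` satisfies `φ`. -/
def Sat (M : Model P I) : M.W → Formula P I → Prop
  | _, .bot => False
  | s, .atom p => M.V s p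
  | s, .neg φ => ¬ Sat M s φ
  | s, .and φ ψ => Sat M s φ ∧ Sat M s ψ
  | s, .know i φ => ∀ t, M.sim i s t → Sat M t φ
  | s, .kh i φ => ∃ σ : Strategy M i,
      (∀ δ : ℕ → M.W, M.sim i s (δ 0) → ¬ σ.InfExec δ) ∧
      (∀ (δ : ℕ → M.W) (h : ℕ), M.sim i s (δ 0) → σ.CompleteFinExec δ h →
        ∀ t, M.sim i (δ h) t → Sat M t φ)

/-! ### Subformulas -/

/-- The set of subformulas of a formula. -/
def subf : Formula P I → Set (Formula P I)
  | .bot => {Formula.bot}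
  | .atom p => {Formula.atom p}
  | .neg φ => insert (Formula.neg φ) (subf φ)
  | .and φ ψ => insert (Formula.and φ ψ) (subf φ ∪ subf ψ)
  | .know i φ => insert (Formula.know i φ) (subf φ)
  | .kh i φ => insert (Formula.kh i φ) (subf φ)

/-- `sub⁺(φ₀) = {ψ, ¬ψ : ψ subformula of φ₀} ∪ {Kᵢψ, ¬Kᵢψ : Khᵢψ subformula of φ₀}`. -/
def subPlus (φ0 : Formula P I) : Set (Formula P I) :=
  {χ | ∃ ψ ∈ subf φ0, χ = ψ ∨ χ = Formula.neg ψ} ∪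
  {χ | ∃ i ψ, Formula.kh i ψ ∈ subf φ0 ∧
      (χ = Formula.know i ψ ∨ χ = Formula.neg (Formula.know i ψ))}

/-- `∼ψ`:  `∼¬χ = χ`, and `∼ψ = ¬ψ` otherwise. -/
def simNeg : Formula P I → Formula P I
  | .neg χ => χ
  | ψ => Formula.neg ψ

/-! ### Labeled trees -/

/-- Labels of tableau edges: `ε`, an agent `i`, or an action `a_{Khᵢψ}`. -/
inductive ELabel (P I : Type) : Type
  | eps : ELabel P I
  | ag : I → ELabel P I
  | act : I → Formula P I → ELabel P I

/-- Labeled rooted trees: each node is labeled with a set of formulas, each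
non-root node carries the label of the edge connecting it to its parent, and
`blockedBy n = some n'` records that the node `n` is blocked by `n'`. -/
structure LTree (P I : Type) where
  Node : Type
  root : Node
  parent : Node → Option Node
  depth : Node → ℕ
  label : Node → Set (Formula P I)
  elabel : Node → ELabel P I
  blockedBy : Node → Option Node
  parent_root : parent root = none
  eq_root : ∀ n, parent n = none → n = root
  depth_root : depth root = 0
  depth_parent : ∀ n m, parent n = some m → depth n = depth m + 1

variable (T : LTree P I)

/-- The children of a node. -/
def Children (n : T.Node) : Set T.Node := {m | T.parent m = some n}

/-- A node is a leaf iff it has no children. -/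
def IsLeaf (n : T.Node) : Prop := ∀ m, T.parent m ≠ some n

/-- `Ancestor T m n`: `m` is a proper ancestor of `n`. -/
def Ancestor (m n : T.Node) : Prop :=
  Relation.TransGen (fun a b => T.parent b = some a) m n

/-- `IAnc T i m n`: `m` is an `i`-ancestor of `n`, i.e. a proper ancestor of
`n` connected to `n` by a path all of whose edges are labeled `i` or `ε`. -/
inductive IAnc (i : I) : T.Node → T.Node → Prop
  | single {m n} : T.parent n = some m →
      (T.elabel n = ELabel.eps ∨ T.elabel n = ELabel.ag i) → IAnc i m n
  | cons {m k n} : T.parent n = some k →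
      (T.elabel n = ELabel.eps ∨ T.elabel n = ELabel.ag i) →
      IAnc i m k → IAnc i m n

/-! ### The tableau construction -/

/-- A set of formulas is blatantly inconsistent iff it contains `⊥` or some
pair `ψ, ¬ψ`. -/
def Blatant (Γ : Set (Formula P I)) : Prop :=
  Formula.bot ∈ Γ ∨ ∃ ψ, ψ ∈ Γ ∧ Formula.neg ψ ∈ Γ

/-- `AutoChecked Γ φ` holds iff none of the expansion rules (a)-(g) is
applicable to `φ` in the label `Γ`; such formulas are (and remain) marked
``checked'' by step (h) of the construction. -/
def AutoChecked (Γ : Set (Formula P I)) : Formula P I → Prop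
  | .neg (.neg ψ) => ψ ∈ Γ
  | .and ψ χ => ψ ∈ Γ ∧ χ ∈ Γ
  | .neg (.and ψ χ) =>
      (Formula.neg ψ ∈ Γ ∧ Formula.neg χ ∈ Γ) ∨
      (Formula.neg ψ ∈ Γ ∧ χ ∈ Γ) ∨ (ψ ∈ Γ ∧ Formula.neg χ ∈ Γ)
  | .know _ ψ => ψ ∈ Γ
  | .neg (.know _ ψ) => Formula.neg ψ ∈ Γ ∨ ψ ∈ Γ
  | .kh i ψ => Formula.neg (Formula.know i ψ) ∈ Γ ∨ Formula.know i ψ ∈ Γ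
  | .neg (.kh i ψ) => Formula.neg (Formula.know i ψ) ∈ Γ
  | _ => True

/-- All formulas of `Γ` are checked; nodes with such labels are the ``and''
nodes (expanded by step (2)), the remaining expanded nodes are ``or'' nodes. -/
def Saturated (Γ : Set (Formula P I)) : Prop := ∀ φ ∈ Γ, AutoChecked Γ φ

/-- The labels of the children created when one of the rules (a)-(g) processes
the formula `φ` at a node labeled `Γ`. -/
def orOut (Γ : Set (Formula P I)) : Formula P I → Set (Set (Formula P I))
  | .neg (.neg ψ) => {insert ψ Γ}
  | .and ψ χ => {insert ψ (insert χ Γ)}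
  | .neg (.and ψ χ) =>
      {insert (Formula.neg ψ) (insert (Formula.neg χ) Γ),
       insert (Formula.neg ψ) (insert χ Γ),
       insert ψ (insert (Formula.neg χ) Γ)}
  | .know _ ψ => {insert ψ Γ}
  | .neg (.know _ ψ) => {insert (Formula.neg ψ) Γ, insert ψ Γ}
  | .kh i ψ =>
      {insert (Formula.neg (Formula.know i ψ)) Γ, insert (Formula.know i ψ) Γ}
  | .neg (.kh i ψ) => {insert (Formula.neg (Formula.know i ψ)) Γ}
  | _ => ∅

/-- `Σ(n,¬Kᵢψ) = {¬ψ} ∪ Γ|Kᵢ ∪ Γ|¬Kᵢ ∪ Γ|Khᵢ ∪ Γ|¬Khᵢ` where `Γ = L(n)`. -/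
def SigmaSet (Γ : Set (Formula P I)) (i : I) (ψ : Formula P I) :
    Set (Formula P I) :=
  insert (Formula.neg ψ)
    {φ ∈ Γ | (∃ χ, φ = Formula.know i χ) ∨ (∃ χ, φ = Formula.neg (Formula.know i χ)) ∨
             (∃ χ, φ = Formula.kh i χ) ∨ (∃ χ, φ = Formula.neg (Formula.kh i χ))}

/-- Expansion condition for ``or'' nodes (step (1), rules (a)-(g)): some
unchecked formula of the label is processed and the children of the node are
exactly the prescribed `ε`-children. -/
def OrNodeCond (n : T.Node) : Prop :=
  ∃ φ ∈ T.label n, ¬ AutoChecked (T.label n) φ ∧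
    (∀ Δ ∈ orOut (T.label n) φ,
      ∃ m, T.parent m = some n ∧ T.elabel m = ELabel.eps ∧ T.label m = Δ ∧
        T.blockedBy m = none) ∧
    (∀ m, T.parent m = some n →
      T.elabel m = ELabel.eps ∧ T.label m ∈ orOut (T.label n) φ ∧
        T.blockedBy m = none)

/-- Expansion condition for ``and'' nodes (step (2), rules (i), (j), (k)): the
children of the node are exactly those prescribed by the three rules, and a
(k)-child is blocked iff some ancestor carries the same label. -/
def AndNodeCond (n : T.Node) : Prop :=
  (∀ i ψ, Formula.neg (Formula.know i ψ) ∈ T.label n →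
    ¬ (∃ n', IAnc T i n' n ∧ T.label n' = SigmaSet (T.label n) i ψ) →
    ∃ m, T.parent m = some n ∧ T.elabel m = ELabel.ag i ∧
      T.label m = SigmaSet (T.label n) i ψ ∧ T.blockedBy m = none) ∧
  (∀ i ψ, Formula.kh i ψ ∈ T.label n → Formula.neg (Formula.know i ψ) ∈ T.label n →
    ∃ m, T.parent m = some n ∧ T.elabel m = ELabel.act i ψ ∧
      T.label m = {Formula.know i ψ} ∧ T.blockedBy m = none) ∧
  (∀ i ψ χ, Formula.neg (Formula.kh i χ) ∈ T.label n →
    Formula.kh i ψ ∈ T.label n → Formula.neg (Formula.know i ψ) ∈ T.label n →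
    ∃ m, T.parent m = some n ∧ T.elabel m = ELabel.act i ψ ∧
      T.label m = {Formula.know i ψ, Formula.neg (Formula.kh i χ)} ∧
      ((∃ n', Ancestor T n' m ∧ T.label n' = T.label m) ↔ T.blockedBy m ≠ none)) ∧
  (∀ m, T.parent m = some n →
    (∃ i ψ, T.elabel m = ELabel.ag i ∧ Formula.neg (Formula.know i ψ) ∈ T.label n ∧
      T.label m = SigmaSet (T.label n) i ψ ∧
      ¬ (∃ n', IAnc T i n' n ∧ T.label n' = SigmaSet (T.label n) i ψ)) ∨
    (∃ i ψ, T.elabel m = ELabel.act i ψ ∧ Formula.kh i ψ ∈ T.label n ∧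
      Formula.neg (Formula.know i ψ) ∈ T.label n ∧
      T.label m = {Formula.know i ψ}) ∨
    (∃ i ψ χ, T.elabel m = ELabel.act i ψ ∧ Formula.neg (Formula.kh i χ) ∈ T.label n ∧
      Formula.kh i ψ ∈ T.label n ∧ Formula.neg (Formula.know i ψ) ∈ T.label n ∧
      T.label m = {Formula.know i ψ, Formula.neg (Formula.kh i χ)}))

/-- `T` is a tableau for `φ₀`: the root is labeled `{φ₀}`, blocked nodes are
blocked by an ancestor with the same label, blocked nodes and blatantly
inconsistent nodes are leaves, and every other node is expanded according to
step (1) (``or'' nodes) or step (2) (``and'' nodes) of the construction. -/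
structure IsTableau (φ0 : Formula P I) (T : LTree P I) : Prop where
  root_label : T.label T.root = {φ0}
  blocked_spec : ∀ n n', T.blockedBy n = some n' →
    Ancestor T n' n ∧ T.label n' = T.label n
  blocked_leaf : ∀ n, T.blockedBy n ≠ none → IsLeaf T n
  blatant_leaf : ∀ n, Blatant (T.label n) → IsLeaf T n
  or_node : ∀ n, ¬ Blatant (T.label n) → T.blockedBy n = none →
    ¬ Saturated (T.label n) → OrNodeCond T n
  and_node : ∀ n, ¬ Blatant (T.label n) → T.blockedBy n = none →
    Saturated (T.label n) → AndNodeCond T n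

/-! ### Subtrees -/

/-- A subtree: a set of nodes containing the root and closed under parents. -/
def IsSubtree (S : Set T.Node) : Prop :=
  T.root ∈ S ∧ ∀ n ∈ S, ∀ m, T.parent n = some m → m ∈ S

/-- A complete subtree: it contains the root, all children of each of its
``and'' non-leaf nodes, and at least one child of each of its ``or'' non-leaf
nodes. -/
def CompleteSubtree (S : Set T.Node) : Prop :=
  IsSubtree T S ∧
  (∀ n ∈ S, ¬ IsLeaf T n → Saturated (T.label n) → ∀ m ∈ Children T n, m ∈ S) ∧
  (∀ n ∈ S, ¬ IsLeaf T n → ¬ Saturated (T.label n) → ∃ m ∈ Children T n, m ∈ S)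

/-- A subtree is closed iff some of its nodes has a blatantly inconsistent
label; otherwise it is open. -/
def ClosedSubtree (S : Set T.Node) : Prop := ∃ n ∈ S, Blatant (T.label n)

/-- A tableau is closed iff all its complete subtrees are closed. -/
def TableauClosed : Prop := ∀ S : Set T.Node, CompleteSubtree T S → ClosedSubtree T S

/-! ### Maximal ε-paths and the induced model -/

/-- An `ε`-edge from `m` down to `n` inside the node set `S`. -/
def EpsStep (S : Set T.Node) (m n : T.Node) : Prop :=
  m ∈ S ∧ n ∈ S ∧ T.parent n = some m ∧ T.elabel n = ELabel.eps

/-- `n` is an `ε`-descendant of `m` inside `S` (reflexive-transitive). -/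
def EpsDesc (S : Set T.Node) : T.Node → T.Node → Prop :=
  Relation.ReflTransGen (EpsStep T S)

/-- A maximal `ε`-path of the subtree with node set `S`, recorded by its
initial node `top` and its end node `bot`.  Its label is `T.label bot`. -/
structure MaxEpsPath (T : LTree P I) (S : Set T.Node) where
  top : T.Node
  bot : T.Node
  top_mem : top ∈ S
  bot_mem : bot ∈ S
  desc : EpsDesc T S top bot
  top_max : ∀ m, ¬ EpsStep T S m top
  bot_max : ∀ m, ¬ EpsStep T S bot m

/-- The states of the induced model: non-blocked maximal `ε`-paths. -/
def PathW (T : LTree P I) (S : Set T.Node) : Type :=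
  {ρ : MaxEpsPath T S // T.blockedBy ρ.bot = none}

/-- `ρ₂` is an `i`-child path of `ρ₁`: `ρ₁ρ₂` is a path whose connecting edge
is labeled `i`. -/
def ISimStep (S : Set T.Node) (i : I) (ρ1 ρ2 : PathW T S) : Prop :=
  T.parent ρ2.1.top = some ρ1.1.bot ∧ T.elabel ρ2.1.top = ELabel.ag i

/-- The node `n'` lies on the maximal `ε`-path `ρ`. -/
def OnPath (S : Set T.Node) (ρ : MaxEpsPath T S) (n' : T.Node) : Prop :=
  EpsDesc T S ρ.top n' ∧ EpsDesc T S n' ρ.bot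

/-- The model `M^T` induced by the (complete) subtree with node set `S`:
states are the non-blocked maximal `ε`-paths, `∼ᵢ` is the least equivalence
relation containing the `i`-edge steps, actions of agent `i` are the actions
`a_{Khᵢψ}` labeling edges of the subtree, `(ρ, ρ') ∈ R_a` iff there is an
`a`-edge from the end of `ρ` to the start of a maximal `ε`-path `ρ''` where
`ρ'' = ρ'` or `ρ''` is blocked by a node lying on `ρ'`, and `ρ ∈ V(p)` iff
`p ∈ L(ρ)`. -/
def inducedModel (T : LTree P I) (S : Set T.Node) : Model P I where
  W := PathW T S
  sim := fun i => Relation.EqvGen (ISimStep T S i)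
  equiv := fun _ => Relation.EqvGen.is_equivalence _
  Act := fun i => {ψ : Formula P I // ∃ m n, m ∈ S ∧ n ∈ S ∧
    T.parent m = some n ∧ T.elabel m = ELabel.act i ψ}
  R := fun i a ρ1 ρ2 => ∃ ρ'' : MaxEpsPath T S,
    T.parent ρ''.top = some ρ1.1.bot ∧ T.elabel ρ''.top = ELabel.act i a.1 ∧
    (ρ'' = ρ2.1 ∨ ∃ n', T.blockedBy ρ''.bot = some n' ∧ OnPath T S ρ2.1 n')
  V := fun ρ p => Formula.atom p ∈ T.label ρ.1.bot

/-- `L(ρ)|Kᵢ`: the `Kᵢ`-formulas of `Γ`. -/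
def projK (i : I) (Γ : Set (Formula P I)) : Set (Formula P I) :=
  {φ ∈ Γ | ∃ ψ, φ = Formula.know i ψ}

/-- `L(ρ)|¬Kᵢ`: the `¬Kᵢ`-formulas of `Γ`. -/
def projNK (i : I) (Γ : Set (Formula P I)) : Set (Formula P I) :=
  {φ ∈ Γ | ∃ ψ, φ = Formula.neg (Formula.know i ψ)}

/-- `L(ρ)|Khᵢ`: the `Khᵢ`-formulas of `Γ`. -/
def projKh (i : I) (Γ : Set (Formula P I)) : Set (Formula P I) :=
  {φ ∈ Γ | ∃ ψ, φ = Formula.kh i ψ}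

/-- `L(ρ)|¬Khᵢ`: the `¬Khᵢ`-formulas of `Γ`. -/
def projNKh (i : I) (Γ : Set (Formula P I)) : Set (Formula P I) :=
  {φ ∈ Γ | ∃ ψ, φ = Formula.neg (Formula.kh i ψ)}

/-- `Γ` contains `φ` stripped of its leading negations, or the negation of that formula. -/
def Decides (Γ : Set (Formula P I)) : Formula P I → Prop
  | .neg φ => Decides Γ φ
  | φ => φ ∈ Γ ∨ Formula.neg φ ∈ Γ

theorem Saturated.decides {Γ : Set (Formula P I)} (hΓ : Saturated Γ) (φ : Formula P I)
    (h : φ ∈ Γ ∨ Formula.neg φ ∈ Γ) : Decides Γ φ := by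
  induction φ with
  | neg φ ih =>
    rcases h with h | h
    · exact ih (Or.inr h)
    · exact ih (Or.inl (hΓ _ h))
  | _ => exact h

theorem Saturated.decides_of_know {Γ : Set (Formula P I)} (hΓ : Saturated Γ) {i : I}
    {φ : Formula P I} (h : Decides Γ (.know i φ)) : Decides Γ φ := by
  rcases h with h | h
  · exact hΓ.decides _ (Or.inl (hΓ _ h))
  · exact hΓ.decides _ (Or.symm (hΓ _ h))

theorem Saturated.decides_of_kh {Γ : Set (Formula P I)} (hΓ : Saturated Γ) {i : I}
    {φ : Formula P I} (h : Decides Γ (.kh i φ)) : Decides Γ (.know i φ) := by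
  rcases h with h | h
  · exact Or.symm (hΓ _ h)
  · exact Or.inr (hΓ _ h)

theorem Saturated.decides_of_and {Γ : Set (Formula P I)} (hΓ : Saturated Γ)
    {φ ψ : Formula P I} (h : Decides Γ (.and φ ψ)) : Decides Γ φ ∧ Decides Γ ψ := by
  rcases h with h | h
  · have := hΓ _ h
    exact ⟨hΓ.decides _ (Or.inl this.1), hΓ.decides _ (Or.inl this.2)⟩
  · rcases hΓ _ h with h | h | h
    · exact ⟨hΓ.decides _ (Or.inr h.1), hΓ.decides _ (Or.inr h.2)⟩
    · exact ⟨hΓ.decides _ (Or.inr h.1), hΓ.decides _ (Or.inl h.2)⟩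
    · exact ⟨hΓ.decides _ (Or.inl h.1), hΓ.decides _ (Or.inr h.2)⟩

theorem subset_of_mem_orOut {Θ Δ : Set (Formula P I)} {φ : Formula P I}
    (hΔ : Δ ∈ orOut Θ φ) : Θ ⊆ Δ := by
  intro χ hχ
  unfold orOut at hΔ
  split at hΔ <;> simp only [Set.mem_insert_iff, Set.mem_singleton_iff,
    Set.mem_empty_iff_false] at hΔ
  all_goals rcases hΔ with rfl | rfl | rfl <;> simp [hχ]

/-- The expansion rules only add formulas decided by a saturated set deciding the processed
label. -/
theorem Saturated.decides_of_mem_orOut {Γ Θ Δ : Set (Formula P I)} (hΓ : Saturated Γ)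
    (hΘ : ∀ χ ∈ Θ, Decides Γ χ) {φ : Formula P I} (hφ : φ ∈ Θ) (hΔ : Δ ∈ orOut Θ φ) :
    ∀ χ ∈ Δ, Decides Γ χ := by
  have hd := hΘ φ hφ
  have hneg : ∀ χ, Decides Γ (.neg χ) = Decides Γ χ := fun _ => rfl
  unfold orOut at hΔ
  split at hΔ <;> simp only [Set.mem_insert_iff, Set.mem_singleton_iff,
    Set.mem_empty_iff_false] at hΔ <;> try simp only [hneg] at hd
  · subst hΔ
    simpa [hd] using hΘ
  · subst hΔ
    simpa [hΓ.decides_of_and hd] using hΘ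
  · rcases hΔ with rfl | rfl | rfl <;> simpa [hneg, hΓ.decides_of_and hd] using hΘ
  · subst hΔ
    simpa [hΓ.decides_of_know hd] using hΘ
  · rcases hΔ with rfl | rfl <;> simpa [hneg, hΓ.decides_of_know hd] using hΘ
  · rcases hΔ with rfl | rfl <;> simpa [hneg, hΓ.decides_of_kh hd] using hΘ
  · subst hΔ
    simpa [hneg, hΓ.decides_of_kh hd] using hΘ

theorem IsTableau.exists_mem_orOut_of_epsStep {φ0 : Formula P I} {T : LTree P I}
    (hT : IsTableau φ0 T) {S : Set T.Node} {m n : T.Node} (h : EpsStep T S m n) :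
    ∃ φ ∈ T.label m, T.label n ∈ orOut (T.label m) φ := by
  obtain ⟨-, -, hp, he⟩ := h
  have hnb : ¬ Blatant (T.label m) := fun hb => hT.blatant_leaf m hb n hp
  have hbl : T.blockedBy m = none := by
    by_contra hb
    exact hT.blocked_leaf m hb n hp
  by_cases hs : Saturated (T.label m)
  · rcases (hT.and_node m hnb hbl hs).2.2.2 n hp with
      ⟨_, _, h, _⟩ | ⟨_, _, h, _⟩ | ⟨_, _, _, h, _⟩ <;> simp [he] at h
  · obtain ⟨φ, hφ, -, -, hch⟩ := hT.or_node m hnb hbl hs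
    exact ⟨φ, hφ, (hch n hp).2.1⟩

theorem IsTableau.label_of_epsDesc {φ0 : Formula P I} {T : LTree P I}
    (hT : IsTableau φ0 T) {S : Set T.Node} {Γ : Set (Formula P I)} (hΓ : Saturated Γ)
    {m n : T.Node} (h : EpsDesc T S m n) (hm : ∀ χ ∈ T.label m, Decides Γ χ) :
    T.label m ⊆ T.label n ∧ ∀ χ ∈ T.label n, Decides Γ χ := by
  induction h with
  | refl => exact ⟨subset_rfl, hm⟩
  | tail _ hstep ih =>
    obtain ⟨φ, hφ, hmem⟩ := hT.exists_mem_orOut_of_epsStep hstep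
    exact ⟨ih.1.trans (subset_of_mem_orOut hmem), hΓ.decides_of_mem_orOut ih.2 hφ hmem⟩

/-- An edge labeled `i` starts in a saturated node, and its end carries the label prescribed by
the rule for some `¬Kᵢψ`. -/
theorem IsTableau.saturated_of_agent_edge {φ0 : Formula P I} {T : LTree P I}
    (hT : IsTableau φ0 T) {i : I} {m n : T.Node} (hp : T.parent n = some m)
    (he : T.elabel n = ELabel.ag i) :
    Saturated (T.label m) ∧ ∃ ψ, Formula.neg (Formula.know i ψ) ∈ T.label m ∧
      T.label n = SigmaSet (T.label m) i ψ := by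
  have hnb : ¬ Blatant (T.label m) := fun hb => hT.blatant_leaf m hb n hp
  have hbl : T.blockedBy m = none := by
    by_contra hb
    exact hT.blocked_leaf m hb n hp
  by_cases hs : Saturated (T.label m)
  · refine ⟨hs, ?_⟩
    rcases (hT.and_node m hnb hbl hs).2.2.2 n hp with
      ⟨j, ψ, h, hψ, hl, _⟩ | ⟨_, _, h, _⟩ | ⟨_, _, _, h, _⟩
    · obtain rfl : i = j := by simpa [he] using h
      exact ⟨ψ, hψ, hl⟩
    · simp [he] at h
    · simp [he] at h
  · obtain ⟨φ, hφ, -, -, hch⟩ := hT.or_node m hnb hbl hs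
    simpa [he] using (hch n hp).1

/-- A consistent set extending `Σ(Γ,¬Kᵢψ)` all of whose formulas are decided by `Γ` has the same
`Kᵢ`- and `Khᵢ`-formulas, negated or not, as `Γ`. -/
theorem proj_eq_of_sigmaSet_subset {Γ Δ : Set (Formula P I)} {i : I} {ψ : Formula P I}
    (hsub : SigmaSet Γ i ψ ⊆ Δ) (hdec : ∀ χ ∈ Δ, Decides Γ χ) (hcons : ¬ Blatant Δ) :
    projK i Γ = projK i Δ ∧ projNK i Γ = projNK i Δ ∧
      projKh i Γ = projKh i Δ ∧ projNKh i Γ = projNKh i Δ := by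
  have hclash : ∀ χ, χ ∈ Δ → Formula.neg χ ∈ Δ → False :=
    fun χ h h' => hcons (Or.inr ⟨χ, h, h'⟩)
  have hK : ∀ χ, Formula.know i χ ∈ Γ → Formula.know i χ ∈ Δ :=
    fun χ h => hsub (Or.inr ⟨h, by simp⟩)
  have hNK : ∀ χ, Formula.neg (.know i χ) ∈ Γ → Formula.neg (.know i χ) ∈ Δ :=
    fun χ h => hsub (Or.inr ⟨h, by simp⟩)
  have hKh : ∀ χ, Formula.kh i χ ∈ Γ → Formula.kh i χ ∈ Δ :=
    fun χ h => hsub (Or.inr ⟨h, by simp⟩)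
  have hNKh : ∀ χ, Formula.neg (.kh i χ) ∈ Γ → Formula.neg (.kh i χ) ∈ Δ :=
    fun χ h => hsub (Or.inr ⟨h, by simp⟩)
  refine ⟨?_, ?_, ?_, ?_⟩ <;> ext φ <;> constructor <;> rintro ⟨hφ, χ, rfl⟩ <;>
    refine ⟨?_, χ, rfl⟩
  · exact hK χ hφ
  · exact (hdec _ hφ).resolve_right fun h => hclash _ hφ (hNK χ h)
  · exact hNK χ hφ
  · exact Or.resolve_left (hdec _ hφ) fun h => hclash _ (hK χ h) hφ
  · exact hKh χ hφ
  · exact (hdec _ hφ).resolve_right fun h => hclash _ hφ (hNKh χ h)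
  · exact hNKh χ hφ
  · exact Or.resolve_left (hdec _ hφ) fun h => hclash _ (hKh χ h) hφ

theorem Saturated.decides_of_mem_sigmaSet {Γ : Set (Formula P I)} (hΓ : Saturated Γ) {i : I}
    {ψ : Formula P I} (hψ : Formula.neg (Formula.know i ψ) ∈ Γ) :
    ∀ χ ∈ SigmaSet Γ i ψ, Decides Γ χ := by
  rintro χ (rfl | hχ)
  · have h : Decides Γ ψ := hΓ.decides_of_know (hΓ.decides (.know i ψ) (Or.inr hψ))
    exact h
  · exact hΓ.decides χ (Or.inl hχ.1)

/-- in the model induced by a complete open subtree,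
`∼ᵢ`-related states share the same `Kᵢ`-, `¬Kᵢ`-, `Khᵢ`- and `¬Khᵢ`-formulas
in their labels. -/
theorem sim_states_share_K_and_Kh {P I : Type} (hI : ∃ i j : I, i ≠ j)
    (φ0 : Formula P I) (T : LTree P I) (hT : IsTableau φ0 T)
    (S : Set T.Node) (hcomp : CompleteSubtree T S) (hopen : ¬ ClosedSubtree T S)
    (i : I) (ρ1 ρ2 : (inducedModel T S).W)
    (hsim : (inducedModel T S).sim i ρ1 ρ2) :
    projK i (T.label ρ1.1.bot) = projK i (T.label ρ2.1.bot) ∧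
    projNK i (T.label ρ1.1.bot) = projNK i (T.label ρ2.1.bot) ∧
    projKh i (T.label ρ1.1.bot) = projKh i (T.label ρ2.1.bot) ∧
    projNKh i (T.label ρ1.1.bot) = projNKh i (T.label ρ2.1.bot) := by
  induction hsim with
  | rel ρ ρ' h =>
    obtain ⟨hs, ψ, hψ, hl⟩ := hT.saturated_of_agent_edge h.1 h.2
    have hd := hT.label_of_epsDesc hs ρ'.1.desc (hl ▸ hs.decides_of_mem_sigmaSet hψ)
    exact proj_eq_of_sigmaSet_subset (hl ▸ hd.1) hd.2
      fun hb => hopen ⟨_, ρ'.1.bot_mem, hb⟩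
  | refl ρ => exact ⟨rfl, rfl, rfl, rfl⟩
  | symm ρ ρ' _ ih => exact ⟨ih.1.symm, ih.2.1.symm, ih.2.2.1.symm, ih.2.2.2.symm⟩
  | trans ρ ρ' ρ'' _ _ ih ih' =>
    exact ⟨ih.1.trans ih'.1, ih.2.1.trans ih'.2.1, ih.2.2.1.trans ih'.2.2.1,
      ih.2.2.2.trans ih'.2.2.2⟩

end ELKh
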